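/- Let Φ be an n×R real matrix and τ ∈ (0,1) with ‖ΦᵀΦ − Id_R‖_op ≤ τ. Then for every n×n real matrix A and every x in the column span of Φ with ‖x‖ = 1: ‖Ax‖ ≤ (1/√(1−τ)) · √( Σ_{l=1}^R ‖A·Φ_{·l}‖² ), where Φ_{·l} denotes the l-th column of Φ. -/

import Mathlib

open Matrix

noncomputable section

/-- Operator (spectral) norm of a rectangular real matrix. -/
def matOpNorm {m n : ℕ} (A : Matrix (Fin m) (Fin n) ℝ) : ℝ :=
  ‖LinearMap.toContinuousLinearMap (Matrix.toEuclideanLin A)‖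

/-- Euclidean norm of a vector in `Fin n → ℝ`. -/
def euclNorm {n : ℕ} (v : Fin n → ℝ) : ℝ :=
  Real.sqrt (∑ j, v j ^ 2)

/-- Lemma 7 of the paper: if `Φ` is an `n × R` real matrix with
`‖ΦᵀΦ - Id_R‖_op ≤ τ` for some `τ ∈ (0,1)`, then for every `n × n` real matrix `A` and
every unit vector `x` in the column span of `Φ`,
`‖Ax‖ ≤ (1/√(1-τ)) √(Σ_{l=1}^R ‖A Φ_{·l}‖²)`. -/
theorem image_norm_bound_on_span {n R : ℕ} (Φ : Matrix (Fin n) (Fin R) ℝ)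
    (τ : ℝ) (hτ0 : 0 < τ) (hτ1 : τ < 1)
    (hΦ : matOpNorm (Φᵀ * Φ - 1) ≤ τ)
    (A : Matrix (Fin n) (Fin n) ℝ)
    (x : Fin n → ℝ) (hx : ∃ α : Fin R → ℝ, x = Φ.mulVec α)
    (hxnorm : euclNorm x = 1) :
    euclNorm (A.mulVec x) ≤
      (1 / Real.sqrt (1 - τ)) *
        Real.sqrt (∑ l : Fin R, euclNorm (A.mulVec fun j => Φ j l) ^ 2) := by
  obtain ⟨α, rfl⟩ := hx
  have hpos : 0 < 1 - τ := by linarith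
  have h1 : (Φ *ᵥ α) ⬝ᵥ (Φ *ᵥ α) = 1 := by
    have h := Real.sqrt_eq_one.mp hxnorm
    rw [← h]
    simp [dotProduct, pow_two]
  have hM : |((Φᵀ * Φ - 1) *ᵥ α) ⬝ᵥ α| ≤ τ * (∑ l, α l ^ 2) := by
    let v : EuclideanSpace ℝ (Fin R) := WithLp.toLp 2 α
    let T := LinearMap.toContinuousLinearMap (Matrix.toEuclideanLin (Φᵀ * Φ - 1))
    have hT : ‖T‖ ≤ τ := hΦ
    have e1 : ((Φᵀ * Φ - 1) *ᵥ α) ⬝ᵥ α = inner ℝ v (T v) := by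
      rw [EuclideanSpace.inner_eq_star_dotProduct]
      rfl
    have e2 : ‖v‖ ^ 2 = ∑ l, α l ^ 2 := by
      rw [EuclideanSpace.norm_sq_eq]
      simp [v]
    rw [e1, ← e2]
    calc |inner ℝ v (T v)| ≤ ‖v‖ * ‖T v‖ := abs_real_inner_le_norm _ _
      _ ≤ ‖v‖ * (‖T‖ * ‖v‖) := by gcongr; exact T.le_opNorm v
      _ ≤ ‖v‖ * (τ * ‖v‖) := by gcongr
      _ = τ * ‖v‖ ^ 2 := by ring
  have h2 : ((Φᵀ * Φ - 1) *ᵥ α) ⬝ᵥ α = 1 - ∑ l, α l ^ 2 := by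
    rw [Matrix.sub_mulVec, sub_dotProduct, Matrix.one_mulVec, ← h1, ← Matrix.mulVec_mulVec,
      Matrix.mulVec_transpose, ← Matrix.dotProduct_mulVec]
    simp [dotProduct, pow_two]
  have ha : ∑ l, α l ^ 2 ≤ 1 / (1 - τ) := by
    rw [h2] at hM
    rw [le_div_iff₀ hpos]
    have := (abs_le.mp hM).1
    linarith
  have key : ∑ j, (A *ᵥ (Φ *ᵥ α)) j ^ 2 ≤
      1 / (1 - τ) * ∑ l : Fin R, euclNorm (A.mulVec fun j => Φ j l) ^ 2 := by
    have e : ∀ l, euclNorm (A.mulVec fun j => Φ j l) ^ 2 = ∑ j, (A * Φ) j l ^ 2 := by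
      intro l
      unfold euclNorm
      rw [Real.sq_sqrt (Finset.sum_nonneg fun _ _ => sq_nonneg _)]
      rfl
    simp_rw [e]
    rw [Finset.sum_comm, Finset.mul_sum]
    refine Finset.sum_le_sum fun j _ => ?_
    rw [Matrix.mulVec_mulVec]
    calc ((A * Φ) *ᵥ α) j ^ 2 ≤ (∑ l, (A * Φ) j l ^ 2) * ∑ l, α l ^ 2 :=
          Finset.sum_mul_sq_le_sq_mul_sq Finset.univ (fun l => (A * Φ) j l) α
      _ ≤ (∑ l, (A * Φ) j l ^ 2) * (1 / (1 - τ)) := by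
          gcongr
      _ = _ := mul_comm _ _
  have e3 : 1 / Real.sqrt (1 - τ) = Real.sqrt (1 / (1 - τ)) := by
    rw [Real.sqrt_div zero_le_one, Real.sqrt_one]
  rw [e3, ← Real.sqrt_mul (by positivity)]
  exact Real.sqrt_le_sqrt key

end
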